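/- Let X be a strictly stable random variable with parameters (ν, θ, τ) and write V̄ = log|X| − τ. Then E[V̄⁶] = 15·DV³ + 15π⁴((1 − θ⁴)/8 + (ν² − 1)/15)·DV + 8π⁶((1 − θ⁶)/32 + (ν³ − 1)/63) + 40ζ(3)²(ν^{3/2} − 1)². -/

import Mathlib

open MeasureTheory ProbabilityTheory

/-- The real value of the Riemann zeta function at a real argument. -/
noncomputable def zetaR (s : ℝ) : ℝ := (riemannZeta (s : ℂ)).re

/-- A real random variable `X` is strictly stable with parameters `(ν, θ, τ)` if
`ν ≥ 1/4`, `|θ| ≤ min 1 (2√ν − 1)`, `P(X = 0) = 0`, `log |X|` has finite absolute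
moments of every order, and the characteristic function of `X` is
`E[exp(i k X)] = exp(−exp(ν^{−1/2}(log|k| + τ − i(π/2)θ sign k) + C(ν^{−1/2} − 1)))`
for all real `k ≠ 0`, where `C` is the Euler–Mascheroni constant. -/
def IsStrictlyStable {Ω : Type*} [MeasureSpace Ω] (X : Ω → ℝ) (ν θ τ : ℝ) : Prop :=
  Measurable X ∧ (1/4 : ℝ) ≤ ν ∧ |θ| ≤ min 1 (2 * Real.sqrt ν - 1) ∧
  (ℙ : Measure Ω) {ω | X ω = 0} = 0 ∧
  (∀ p : ℕ, Integrable (fun ω => (abs (Real.log (abs (X ω)))) ^ p)) ∧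
  ∀ k : ℝ, k ≠ 0 →
    (∫ ω, Complex.exp (Complex.I * (k : ℂ) * (X ω : ℂ))) =
      Complex.exp (-Complex.exp
        (((ν ^ (-(1/2) : ℝ) : ℝ) : ℂ) *
            (((Real.log |k| : ℝ) : ℂ) + (τ : ℂ) -
              Complex.I * ((Real.pi / 2 : ℝ) : ℂ) * (θ : ℂ) * ((Real.sign k : ℝ) : ℂ)) +
          ((Real.eulerMascheroniConstant : ℝ) : ℂ) * (((ν ^ (-(1/2) : ℝ) : ℝ) : ℂ) - 1)))

/-!
For `0 < s < 1`, integrating `k^(-s-1) (cos (k X) - 1)` in `k > 0` gives a constant multiple of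
`|X|^s`, so Fubini expresses `E |X|^s` through the characteristic function of `X`. For a strictly
stable `X` both sides are gamma integrals, and the cumulant generating function of `log |X| - τ`
comes out as an explicit combination of `log Γ` and `log cos`, whose Taylor coefficients are zeta
values. Since `E |X|^s` is computed for small positive `s` only, the moments are recovered from
derivatives of the moment generating function as `s → 0⁺`, by dominated convergence.
-/

section CauchySaalschutz

open Set Filter Topology Asymptotics

lemma norm_cexp_neg_sub_one_le {w : ℂ} (hw : 0 ≤ w.re) :
    ‖Complex.exp (-w) - 1‖ ≤ 2 * min 1 ‖w‖ := by
  rcases le_total 1 ‖w‖ with h | h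
  · have hexp : ‖Complex.exp (-w)‖ ≤ 1 := by
      simpa [Complex.norm_exp] using hw
    calc ‖Complex.exp (-w) - 1‖ ≤ ‖Complex.exp (-w)‖ + ‖(1 : ℂ)‖ := norm_sub_le _ _
      _ ≤ 2 * min 1 ‖w‖ := by rw [min_eq_left h, norm_one]; linarith
  · simpa [min_eq_right h] using Complex.norm_exp_sub_one_le (x := -w) (by simpa using h)

lemma integrableOn_rpow_mul_min_one {σ M : ℝ} (hσ : -1 < σ) (hσ' : σ < 0) (hM : 0 ≤ M) :
    IntegrableOn (fun t : ℝ => t ^ (σ - 1) * min 1 (M * t)) (Ioi 0) := by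
  have hcont : Continuous fun t : ℝ => min 1 (M * t) := by fun_prop
  refine mellin_convergent_of_isBigO_scalar (a := 0) (b := -1)
    (hcont.locallyIntegrable.locallyIntegrableOn _) ?_ hσ' ?_ hσ
  · refine IsBigO.of_bound 1 ?_
    filter_upwards [eventually_gt_atTop 0] with t ht
    rw [Real.norm_of_nonneg (by positivity)]
    simp
  · refine IsBigO.of_bound M ?_
    filter_upwards [self_mem_nhdsWithin] with t (ht : 0 < t)
    rw [Real.norm_of_nonneg (by positivity), neg_neg, Real.rpow_one, Real.norm_of_nonneg ht.le]
    exact min_le_right _ _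

variable {s z : ℂ}

lemma norm_cpow_smul_cexp_neg_mul_sub_one_le {M t : ℝ} (hz : 0 ≤ z.re) (hM : ‖z‖ ≤ M)
    (ht : 0 < t) :
    ‖(t : ℂ) ^ (s - 1) • (Complex.exp (-(z * t)) - 1)‖ ≤
      2 * (t ^ (s.re - 1) * min 1 (M * t)) := by
  have hzt : ‖z * t‖ ≤ M * t := by
    rw [norm_mul, Complex.norm_of_nonneg ht.le]
    gcongr
  rw [norm_smul, Complex.norm_cpow_eq_rpow_re_of_pos ht, Complex.sub_re, Complex.one_re,
    mul_left_comm]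
  gcongr
  exact (norm_cexp_neg_sub_one_le (by simpa using mul_nonneg hz ht.le)).trans (by gcongr)

lemma mellinConvergent_cexp_neg_mul_sub_one (hs : -1 < s.re) (hs' : s.re < 0) (hz : 0 ≤ z.re) :
    MellinConvergent (fun t : ℝ => Complex.exp (-(z * t)) - 1) s := by
  refine ((integrableOn_rpow_mul_min_one hs hs' (norm_nonneg z)).const_mul 2).mono'
    (by fun_prop) ?_
  filter_upwards [ae_restrict_mem measurableSet_Ioi] with t ht
  exact norm_cpow_smul_cexp_neg_mul_sub_one_le hz le_rfl ht

lemma continuousOn_mellin_cexp_neg_mul_sub_one (hs : -1 < s.re) (hs' : s.re < 0) :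
    ContinuousOn (fun z : ℂ => mellin (fun t : ℝ => Complex.exp (-(z * t)) - 1) s)
      {z | 0 ≤ z.re} := by
  intro z _
  refine continuousWithinAt_of_dominated
    (bound := fun t => 2 * (t ^ (s.re - 1) * min 1 ((‖z‖ + 1) * t)))
    (.of_forall fun w => by fun_prop) ?_
    ((integrableOn_rpow_mul_min_one hs hs' (by positivity)).const_mul 2)
    (.of_forall fun t => Continuous.continuousWithinAt (by fun_prop))
  have hnorm : ∀ᶠ w in 𝓝[{z : ℂ | 0 ≤ z.re}] z, ‖w‖ < ‖z‖ + 1 :=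
    nhdsWithin_le_nhds (continuous_norm.tendsto z |>.eventually_lt_const (lt_add_one _))
  filter_upwards [self_mem_nhdsWithin, hnorm] with w hw hwz
  filter_upwards [ae_restrict_mem measurableSet_Ioi] with t ht
  exact norm_cpow_smul_cexp_neg_mul_sub_one_le hw hwz.le ht

lemma mellin_cexp_neg_ofReal_mul_sub_one {x : ℝ} (hx : 0 < x) :
    mellin (fun t : ℝ => Complex.exp (-(x * t)) - 1) s =
      (x : ℂ) ^ (-s) * mellin (fun t : ℝ => Complex.exp (-t) - 1) s := by
  simpa using mellin_comp_mul_left (fun t : ℝ => Complex.exp (-t) - 1) s hx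

lemma norm_cpow_smul_cexp_neg_mul_mul_neg_le {ε t : ℝ} (hε : ε ≤ z.re) (ht : 0 < t) :
    ‖(t : ℂ) ^ (s - 1) • (Complex.exp (-(z * t)) * -(t : ℂ))‖ ≤
      t ^ s.re * Real.exp (-ε * t) := by
  have hpow : t ^ s.re = t ^ (s.re - 1) * t := by
    rw [← Real.rpow_add_one ht.ne', sub_add_cancel]
  rw [norm_smul, Complex.norm_cpow_eq_rpow_re_of_pos ht, norm_mul, Complex.norm_exp, norm_neg,
    Complex.norm_of_nonneg ht.le, hpow, mul_assoc, mul_comm t]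
  simp only [Complex.sub_re, Complex.one_re, Complex.neg_re, Complex.re_mul_ofReal, neg_mul]
  gcongr

lemma hasDerivAt_mellin_cexp_neg_mul_sub_one (hs : -1 < s.re) (hs' : s.re < 0) (hz : 0 < z.re) :
    HasDerivAt (fun z : ℂ => mellin (fun t : ℝ => Complex.exp (-(z * t)) - 1) s)
      (-mellin (fun t : ℝ => Complex.exp (-(z * t))) (s + 1)) z := by
  have hε : 0 < z.re / 2 := half_pos hz
  have hderiv (t : ℝ) (w : ℂ) :
      HasDerivAt (fun w : ℂ => (t : ℂ) ^ (s - 1) • (Complex.exp (-(w * t)) - 1))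
        ((t : ℂ) ^ (s - 1) • (Complex.exp (-(w * t)) * -(t : ℂ))) w := by
    simpa using ((((hasDerivAt_id w).mul_const (t : ℂ)).fun_neg.cexp).sub_const 1).fun_const_smul
      ((t : ℂ) ^ (s - 1))
  have hdom : IntegrableOn (fun t : ℝ => t ^ s.re * Real.exp (-(z.re / 2) * t)) (Ioi 0) := by
    simpa using integrableOn_rpow_mul_exp_neg_mul_rpow hs one_pos hε
  have h := (hasDerivAt_integral_of_dominated_loc_of_deriv_le
    (F := fun w t => (t : ℂ) ^ (s - 1) • (Complex.exp (-(w * t)) - 1))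
    (bound := fun t => t ^ s.re * Real.exp (-(z.re / 2) * t))
    ((isOpen_lt continuous_const Complex.continuous_re).mem_nhds (half_lt_self hz))
    (.of_forall fun w => by fun_prop) (mellinConvergent_cexp_neg_mul_sub_one hs hs' hz.le)
    (by fun_prop) ((ae_restrict_iff' measurableSet_Ioi).2 (.of_forall fun t ht w hw =>
      norm_cpow_smul_cexp_neg_mul_mul_neg_le (le_of_lt hw) ht))
    hdom
    (.of_forall fun t w _ => hderiv t w)).2
  convert! h using 1
  rw [mellin, ← integral_neg]
  refine setIntegral_congr_fun measurableSet_Ioi fun t (ht : 0 < t) => ?_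
  have hpow : (t : ℂ) ^ (s + 1 - 1) = (t : ℂ) ^ (s - 1) * t := by
    rw [add_sub_right_comm, Complex.cpow_add _ _ (by exact_mod_cast ht.ne'),
      Complex.cpow_one]
  simp only [hpow, smul_eq_mul]
  ring

-- Differentiate both sides of `∫ t^(s-1) (e^(-xt) - 1) dt = x^(-s) G` at `x = 1`: the left side
-- gives `-Γ(s + 1)`, the right side `-s G`.
lemma mellin_cexp_neg_sub_one (hs : -1 < s.re) (hs' : s.re < 0) :
    mellin (fun t : ℝ => Complex.exp (-t) - 1) s = Complex.Gamma s := by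
  set G := mellin (fun t : ℝ => Complex.exp (-t) - 1) s
  have hs0 : s ≠ 0 := fun h => by simp [h] at hs'
  have hscale : ∀ᶠ x : ℝ in 𝓝 1,
      mellin (fun t : ℝ => Complex.exp (-(x * t)) - 1) s = (x : ℂ) ^ (-s) * G := by
    filter_upwards [lt_mem_nhds one_pos] with x hx
    exact mellin_cexp_neg_ofReal_mul_sub_one hx
  have hGamma : mellin (fun t : ℝ => Complex.exp (-(1 * t))) (s + 1) = s * Complex.Gamma s := by
    rw [← Complex.Gamma_add_one s hs0, Complex.Gamma_eq_integral (by simpa using by linarith),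
      Complex.GammaIntegral_eq_mellin]
    simp
  have hleft : HasDerivAt (fun x : ℝ => (x : ℂ) ^ (-s) * G) (-(s * Complex.Gamma s)) 1 := by
    have h := (hasDerivAt_mellin_cexp_neg_mul_sub_one (z := ((1 : ℝ) : ℂ)) hs hs' (by simp))
    rw [Complex.ofReal_one, hGamma, ← Complex.ofReal_one] at h
    exact h.comp_ofReal.congr_of_eventuallyEq (hscale.mono fun x hx => hx.symm)
  have hright : HasDerivAt (fun x : ℝ => (x : ℂ) ^ (-s) * G) (-(s * G)) 1 := by
    have h := (((hasDerivAt_id ((1 : ℝ) : ℂ)).cpow_const (c := -s) (by simp)).mul_const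
      G).comp_ofReal
    simpa using h
  exact mul_left_cancel₀ hs0 (neg_injective (hright.unique hleft))

lemma mellin_cexp_neg_mul_sub_one_of_re_pos (hs : -1 < s.re) (hs' : s.re < 0) (hz : 0 < z.re) :
    mellin (fun t : ℝ => Complex.exp (-(z * t)) - 1) s = Complex.Gamma s * z ^ (-s) := by
  have hopen : IsOpen {z : ℂ | 0 < z.re} := isOpen_lt continuous_const Complex.continuous_re
  have hleft : AnalyticOnNhd ℂ
      (fun z : ℂ => mellin (fun t : ℝ => Complex.exp (-(z * t)) - 1) s) {z | 0 < z.re} :=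
    DifferentiableOn.analyticOnNhd (fun w hw => (hasDerivAt_mellin_cexp_neg_mul_sub_one hs hs'
      hw).differentiableAt.differentiableWithinAt) hopen
  have hright : AnalyticOnNhd ℂ (fun z : ℂ => Complex.Gamma s * z ^ (-s)) {z | 0 < z.re} :=
    DifferentiableOn.analyticOnNhd (fun w hw => ((differentiableAt_id.cpow_const
      (.inl hw)).const_mul _).differentiableWithinAt) hopen
  have hreal : ∀ᶠ x : ℝ in 𝓝[≠] 1, mellin (fun t : ℝ => Complex.exp (-(x * t)) - 1) s =
      Complex.Gamma s * (x : ℂ) ^ (-s) := by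
    filter_upwards [nhdsWithin_le_nhds (lt_mem_nhds one_pos)] with x hx
    rw [mellin_cexp_neg_ofReal_mul_sub_one hx, mellin_cexp_neg_sub_one hs hs', mul_comm]
  have hofReal : Tendsto ((↑) : ℝ → ℂ) (𝓝[≠] 1) (𝓝[≠] 1) := by
    rw [← Complex.ofReal_one]
    exact Complex.continuous_ofReal.continuousAt.continuousWithinAt.tendsto_nhdsWithin
      fun x hx => by simpa using hx
  exact hleft.eqOn_of_preconnected_of_frequently_eq hright
    (convex_halfSpace_re_gt 0).isPreconnected (z₀ := 1) (by simp)
    (hofReal.frequently hreal.frequently) hz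

theorem mellin_cexp_neg_mul_sub_one (hs : -1 < s.re) (hs' : s.re < 0) (hz : 0 ≤ z.re) :
    mellin (fun t : ℝ => Complex.exp (-(z * t)) - 1) s = Complex.Gamma s * z ^ (-s) := by
  have hpow : ContinuousOn (fun z : ℂ => Complex.Gamma s * z ^ (-s)) {z | 0 ≤ z.re} :=
    fun w hw => ((Complex.continuousAt_cpow_const_of_re_pos (.inl hw)
      (by simpa using hs')).const_mul _).continuousWithinAt
  have heq : EqOn (fun z : ℂ => mellin (fun t : ℝ => Complex.exp (-(z * t)) - 1) s)
      (fun z => Complex.Gamma s * z ^ (-s)) {z | 0 < z.re} :=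
    fun w hw => mellin_cexp_neg_mul_sub_one_of_re_pos hs hs' hw
  exact heq.of_subset_closure (continuousOn_mellin_cexp_neg_mul_sub_one hs hs') hpow
    (fun w (hw : 0 < w.re) => hw.le) (Complex.closure_setOfPred_lt_re 0).ge hz

end CauchySaalschutz

section AbsoluteMoments

open Set Filter Topology

lemma integrableOn_rpow_mul_re {f : ℝ → ℂ} {s : ℝ} (hf : MellinConvergent f s) :
    IntegrableOn (fun t : ℝ => t ^ (s - 1) * (f t).re) (Ioi 0) := by
  refine IntegrableOn.congr_fun (Integrable.re hf) (fun t (ht : 0 < t) => ?_) measurableSet_Ioi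
  simp [← Complex.ofReal_one, ← Complex.ofReal_sub, ← Complex.ofReal_cpow ht.le]

lemma re_mellin_ofReal {f : ℝ → ℂ} {s : ℝ} (hf : MellinConvergent f s) :
    (mellin f s).re = ∫ t in Ioi (0 : ℝ), t ^ (s - 1) * (f t).re := by
  rw [mellin, ← RCLike.re_eq_complex_re, ← integral_re hf]
  refine setIntegral_congr_fun measurableSet_Ioi fun t (ht : 0 < t) => ?_
  simp [← Complex.ofReal_one, ← Complex.ofReal_sub, ← Complex.ofReal_cpow ht.le]

variable {s : ℝ}

lemma integral_rpow_mul_cos_sub_one (hs : 0 < s) (hs' : s < 1) (x : ℝ) :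
    ∫ k in Ioi (0 : ℝ), k ^ (-s - 1) * (Real.cos (k * x) - 1) =
      Real.Gamma (-s) * Real.cos (Real.pi / 2 * s) * |x| ^ s := by
  have hconv : MellinConvergent (fun t : ℝ => Complex.exp (-(|x| * Complex.I * t)) - 1)
      ((-s : ℝ) : ℂ) :=
    mellinConvergent_cexp_neg_mul_sub_one (by simpa using hs') (by simpa using hs) (by simp)
  have hcos (k : ℝ) :
      (Complex.exp (-(|x| * Complex.I * k)) - 1).re = Real.cos (k * x) - 1 := by
    rw [Complex.sub_re, Complex.exp_re, ← Real.cos_abs (k * x), abs_mul, ← Real.cos_abs]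
    simp [abs_mul, mul_comm]
  have hpow : ((|x| * Complex.I) ^ (s : ℂ)).re = Real.cos (Real.pi / 2 * s) * |x| ^ s := by
    rcases eq_or_ne x 0 with rfl | hx
    · simp [hs.ne']
    · rw [Complex.cpow_ofReal_re, Complex.arg_real_mul _ (abs_pos.2 hx), Complex.arg_I, mul_comm]
      simp
  simp only [← hcos]
  rw [← re_mellin_ofReal hconv, mellin_cexp_neg_mul_sub_one (by simpa using hs')
    (by simpa using hs) (by simp), Complex.Gamma_ofReal, Complex.re_ofReal_mul,
    ← Complex.ofReal_neg, neg_neg, hpow, mul_assoc]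

variable {μ : Measure ℝ}

lemma integrable_cos_mul [IsFiniteMeasure μ] (k : ℝ) : Integrable (fun x => Real.cos (k * x)) μ :=
  .of_bound (C := 1) (by fun_prop) (.of_forall fun _ => Real.abs_cos_le_one _)

variable [IsProbabilityMeasure μ]

lemma integral_cos_mul_sub_one (k : ℝ) :
    ∫ x, (Real.cos (k * x) - 1) ∂μ = (charFun μ k).re - 1 := by
  have hint : Integrable (fun x : ℝ => Complex.exp (k * x * Complex.I)) μ :=
    .of_bound (C := 1) (by fun_prop) (.of_forall fun x => by
      rw [← Complex.ofReal_mul, Complex.norm_exp_ofReal_mul_I])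
  rw [integral_sub (integrable_cos_mul k) (integrable_const 1), charFun_apply_real,
    ← RCLike.re_eq_complex_re, ← integral_re hint]
  simp [Complex.exp_re]

lemma integrable_prod_rpow_mul_cos_sub_one
    (h : IntegrableOn (fun k => k ^ (-s - 1) * ((charFun μ k).re - 1)) (Ioi 0)) :
    Integrable (fun p : ℝ × ℝ => p.2 ^ (-s - 1) * (Real.cos (p.2 * p.1) - 1))
      (μ.prod (volume.restrict (Ioi 0))) := by
  rw [integrable_prod_iff' (by fun_prop)]
  have hcos (k : ℝ) : Integrable (fun x => Real.cos (k * x) - 1) μ :=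
    (integrable_cos_mul k).sub (integrable_const 1)
  refine ⟨.of_forall fun k => (hcos k).const_mul (k ^ (-s - 1)), ?_⟩
  refine IntegrableOn.congr_fun h.neg (fun k (hk : 0 < k) => ?_) measurableSet_Ioi
  have hnorm (x : ℝ) : ‖k ^ (-s - 1) * (Real.cos (k * x) - 1)‖ =
      -(k ^ (-s - 1) * (Real.cos (k * x) - 1)) :=
    Real.norm_of_nonpos (mul_nonpos_of_nonneg_of_nonpos (by positivity)
      (sub_nonpos.2 (Real.cos_le_one _)))
  simp only [hnorm, integral_neg, integral_const_mul, integral_cos_mul_sub_one, Pi.neg_apply]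

lemma cos_pi_div_two_mul_pos {x : ℝ} (hx : |x| < 1) : 0 < Real.cos (Real.pi / 2 * x) := by
  have hx' := abs_lt.1 hx
  exact Real.cos_pos_of_mem_Ioo ⟨by nlinarith [Real.pi_pos], by nlinarith [Real.pi_pos]⟩

lemma Gamma_neg_mul_cos_ne_zero (hs : 0 < s) (hs' : s < 1) :
    Real.Gamma (-s) * Real.cos (Real.pi / 2 * s) ≠ 0 := by
  have hGamma : Real.Gamma (-s) ≠ 0 := Real.Gamma_ne_zero fun m hm => by
    have hm' : s = m := neg_injective hm
    rw [hm'] at hs hs'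
    exact hs'.not_ge (by exact_mod_cast Nat.one_le_iff_ne_zero.2 (by rintro rfl; simp at hs))
  exact mul_ne_zero hGamma (cos_pi_div_two_mul_pos (by rwa [abs_of_pos hs])).ne'

lemma integrable_rpow_abs_of_integrableOn_charFun (hs : 0 < s) (hs' : s < 1)
    (h : IntegrableOn (fun k => k ^ (-s - 1) * ((charFun μ k).re - 1)) (Ioi 0)) :
    Integrable (fun x => |x| ^ s) μ := by
  have hint := (integrable_prod_rpow_mul_cos_sub_one h).integral_prod_left
  simp only [integral_rpow_mul_cos_sub_one hs hs'] at hint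
  exact (integrable_const_mul_iff (Gamma_neg_mul_cos_ne_zero hs hs').isUnit _).1 hint

theorem integral_rpow_mul_charFun_re_sub_one (hs : 0 < s) (hs' : s < 1)
    (h : IntegrableOn (fun k => k ^ (-s - 1) * ((charFun μ k).re - 1)) (Ioi 0)) :
    ∫ k in Ioi (0 : ℝ), k ^ (-s - 1) * ((charFun μ k).re - 1) =
      Real.Gamma (-s) * Real.cos (Real.pi / 2 * s) * ∫ x, |x| ^ s ∂μ := by
  have hswap := integral_integral_swap
    (f := fun x k => k ^ (-s - 1) * (Real.cos (k * x) - 1))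
    (integrable_prod_rpow_mul_cos_sub_one h)
  simpa only [integral_rpow_mul_cos_sub_one hs hs', integral_const_mul,
    integral_cos_mul_sub_one] using hswap.symm

end AbsoluteMoments

section StableLaw

open Set

variable {α s : ℝ}

lemma mellinConvergent_cexp_neg_mul_rpow_sub_one {c : ℂ} (hc : 0 ≤ c.re) (hs : 0 < s)
    (hsα : s < α) :
    MellinConvergent (fun k : ℝ => Complex.exp (-(c * (k ^ α : ℝ))) - 1) ((-s : ℝ) : ℂ) := by
  have hα : 0 < α := hs.trans hsα
  refine (MellinConvergent.comp_rpow (f := fun t : ℝ => Complex.exp (-(c * t)) - 1) hα.ne').2 ?_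
  rw [← Complex.ofReal_div]
  refine mellinConvergent_cexp_neg_mul_sub_one ?_ ?_ hc
  · rwa [Complex.ofReal_re, lt_div_iff₀ hα, neg_one_mul, neg_lt_neg_iff]
  · exact div_neg_of_neg_of_pos (neg_neg_of_pos hs) hα

lemma mellin_cexp_neg_mul_rpow_sub_one {c : ℂ} (hc : 0 ≤ c.re) (hs : 0 < s) (hsα : s < α) :
    mellin (fun k : ℝ => Complex.exp (-(c * (k ^ α : ℝ))) - 1) ((-s : ℝ) : ℂ) =
      ((α⁻¹ * Real.Gamma (-(s / α)) : ℝ) : ℂ) * c ^ ((s / α : ℝ) : ℂ) := by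
  have hα : 0 < α := hs.trans hsα
  have hsα' : ((-s : ℝ) : ℂ) / α = ((-(s / α) : ℝ) : ℂ) := by push_cast; ring
  rw [mellin_comp_rpow (fun t : ℝ => Complex.exp (-(c * t)) - 1), abs_of_pos hα, hsα',
    mellin_cexp_neg_mul_sub_one _ _ hc, Complex.Gamma_ofReal, ← Complex.ofReal_neg, neg_neg,
    Complex.real_smul, Complex.ofReal_mul, mul_assoc]
  · rwa [Complex.ofReal_re, neg_lt_neg_iff, div_lt_one hα]
  · exact neg_neg_of_pos (div_pos hs hα)

lemma cexp_cpow {w : ℂ} (hw : |w.im| ≤ Real.pi / 2) (z : ℂ) :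
    Complex.exp w ^ z = Complex.exp (w * z) := by
  have hw' := abs_le.1 hw
  rw [Complex.cpow_def_of_ne_zero (Complex.exp_ne_zero w),
    Complex.log_exp (by linarith [Real.pi_pos]) (by linarith [Real.pi_pos])]

lemma re_cexp_nonneg {w : ℂ} (hw : |w.im| ≤ Real.pi / 2) : 0 ≤ (Complex.exp w).re := by
  rw [Complex.exp_re]
  exact mul_nonneg (Real.exp_pos _).le (Real.cos_nonneg_of_mem_Icc (abs_le.1 hw))

variable {μ : Measure ℝ} {w : ℂ}

lemma integrableOn_rpow_mul_charFun_re_sub_one (hw : |w.im| ≤ Real.pi / 2)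
    (hμ : ∀ k : ℝ, 0 < k → charFun μ k = Complex.exp (-(Complex.exp w * (k ^ α : ℝ))))
    (hs : 0 < s) (hsα : s < α) :
    IntegrableOn (fun k => k ^ (-s - 1) * ((charFun μ k).re - 1)) (Ioi 0) := by
  refine IntegrableOn.congr_fun (integrableOn_rpow_mul_re
    (mellinConvergent_cexp_neg_mul_rpow_sub_one (re_cexp_nonneg hw) hs hsα)) (fun k hk => ?_)
    measurableSet_Ioi
  simp only [hμ k hk, Complex.sub_re, Complex.one_re]

lemma integral_rpow_mul_charFun_re_sub_one_of_charFun_eq (hw : |w.im| ≤ Real.pi / 2)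
    (hμ : ∀ k : ℝ, 0 < k → charFun μ k = Complex.exp (-(Complex.exp w * (k ^ α : ℝ))))
    (hs : 0 < s) (hsα : s < α) :
    ∫ k in Ioi (0 : ℝ), k ^ (-s - 1) * ((charFun μ k).re - 1) =
      α⁻¹ * Real.Gamma (-(s / α)) *
        (Real.exp (w.re * (s / α)) * Real.cos (w.im * (s / α))) := by
  have hc := re_cexp_nonneg hw
  calc ∫ k in Ioi (0 : ℝ), k ^ (-s - 1) * ((charFun μ k).re - 1)
      = (mellin (fun k : ℝ => Complex.exp (-(Complex.exp w * (k ^ α : ℝ))) - 1)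
          ((-s : ℝ) : ℂ)).re := by
        rw [re_mellin_ofReal (mellinConvergent_cexp_neg_mul_rpow_sub_one hc hs hsα)]
        refine setIntegral_congr_fun measurableSet_Ioi fun k hk => ?_
        simp only [hμ k hk, Complex.sub_re, Complex.one_re]
    _ = _ := by
        rw [mellin_cexp_neg_mul_rpow_sub_one hc hs hsα, cexp_cpow hw, Complex.re_ofReal_mul,
          Complex.exp_re, Complex.re_mul_ofReal, Complex.im_mul_ofReal]

variable [IsProbabilityMeasure μ]

lemma integrable_rpow_abs_of_charFun_eq (hw : |w.im| ≤ Real.pi / 2)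
    (hμ : ∀ k : ℝ, 0 < k → charFun μ k = Complex.exp (-(Complex.exp w * (k ^ α : ℝ))))
    (hs : 0 < s) (hs' : s < 1) (hsα : s < α) :
    Integrable (fun x => |x| ^ s) μ :=
  integrable_rpow_abs_of_integrableOn_charFun hs hs'
    (integrableOn_rpow_mul_charFun_re_sub_one hw hμ hs hsα)

theorem integral_rpow_abs_of_charFun_eq (hw : |w.im| ≤ Real.pi / 2)
    (hμ : ∀ k : ℝ, 0 < k → charFun μ k = Complex.exp (-(Complex.exp w * (k ^ α : ℝ))))
    (hs : 0 < s) (hs' : s < 1) (hsα : s < α) :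
    Real.Gamma (1 - s) * Real.cos (Real.pi / 2 * s) * ∫ x, |x| ^ s ∂μ =
      Real.Gamma (1 - s / α) * (Real.exp (w.re * (s / α)) * Real.cos (w.im * (s / α))) := by
  have hα : 0 < α := hs.trans hsα
  have hGamma {x : ℝ} (hx : 0 < x) : Real.Gamma (1 - x) = -x * Real.Gamma (-x) := by
    rw [← Real.Gamma_add_one (neg_ne_zero.2 hx.ne'), neg_add_eq_sub]
  have h := (integral_rpow_mul_charFun_re_sub_one hs hs'
    (integrableOn_rpow_mul_charFun_re_sub_one hw hμ hs hsα)).symm.trans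
    (integral_rpow_mul_charFun_re_sub_one_of_charFun_eq hw hμ hs hsα)
  rw [hGamma hs, hGamma (div_pos hs hα)]
  linear_combination -s * h

end StableLaw

section LogGamma

open Filter Topology

lemma summable_one_div_nat_add_one_pow {j : ℕ} (hj : 1 < j) :
    Summable fun m : ℕ => 1 / ((m : ℝ) + 1) ^ j := by
  simpa using (summable_nat_add_iff 1).2 (Real.summable_one_div_nat_pow.2 hj)

lemma hasSum_zetaR {j : ℕ} (hj : 1 < j) :
    HasSum (fun m : ℕ => 1 / ((m : ℝ) + 1) ^ j) (zetaR j) := by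
  have hre : zetaR j = ∑' m : ℕ, 1 / ((m : ℝ) + 1) ^ j := by
    rw [zetaR, Complex.ofReal_natCast, zeta_eq_tsum_one_div_nat_add_one_cpow (by simpa using hj),
      ← Complex.ofReal_re (∑' m : ℕ, 1 / ((m : ℝ) + 1) ^ j), Complex.ofReal_tsum]
    simp [Complex.cpow_natCast]
  rw [hre]
  exact (summable_one_div_nat_add_one_pow hj).hasSum

lemma zetaR_two : zetaR 2 = Real.pi ^ 2 / 6 := by
  have h : riemannZeta 2 = ((Real.pi ^ 2 / 6 : ℝ) : ℂ) := by simp [riemannZeta_two]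
  simp only [zetaR, Complex.ofReal_ofNat, h, Complex.ofReal_re]

lemma zetaR_four : zetaR 4 = Real.pi ^ 4 / 90 := by
  have h : riemannZeta 4 = ((Real.pi ^ 4 / 90 : ℝ) : ℂ) := by simp [riemannZeta_four]
  simp only [zetaR, Complex.ofReal_ofNat, h, Complex.ofReal_re]

lemma zetaR_six : zetaR 6 = Real.pi ^ 6 / 945 := by
  have hB : bernoulli 6 = 1 / 42 := by decide +kernel
  have h : riemannZeta 6 = ((Real.pi ^ 6 / 945 : ℝ) : ℂ) := by
    have h3 := riemannZeta_two_mul_nat (k := 3) (by norm_num)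
    norm_num [hB, Nat.factorial] at h3
    rw [h3]
    push_cast
    ring
  simp only [zetaR, Complex.ofReal_ofNat, h, Complex.ofReal_re]

/-- Taylor coefficients at `0` of `x ↦ log Γ(1 - x) - γ x`: here `γ` is the Euler–Mascheroni
constant, and removing the linear term makes the first two coefficients vanish. -/
noncomputable def logGammaCoeff (n : ℕ) : ℝ := if n < 2 then 0 else zetaR n / n

lemma logGammaCoeff_of_two_le {n : ℕ} (hn : 2 ≤ n) : logGammaCoeff n = zetaR n / n :=
  if_neg hn.not_gt

lemma log_factorial_eq_sum (n : ℕ) :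
    Real.log n.factorial = ∑ m ∈ Finset.range n, Real.log ((m : ℝ) + 1) := by
  rw [← Finset.prod_range_add_one_eq_factorial, Nat.cast_prod,
    Real.log_prod fun m _ => by positivity]
  push_cast
  rfl

variable {x : ℝ}

lemma sum_neg_log_one_sub_div_sub_div (hx : x < 1) (n : ℕ) :
    ∑ m ∈ Finset.range (n + 1),
        (-Real.log (1 - x / ((m : ℝ) + 1)) - x / ((m : ℝ) + 1)) =
      Real.BohrMollerup.logGammaSeq (1 - x) n
        - (harmonic (n + 1) - Real.log ((n + 1 : ℕ) : ℝ)) * x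
        + (Real.log ((n : ℝ) + 1) - Real.log n) * (1 - x) := by
  have hlog (m : ℕ) : Real.log (1 - x / ((m : ℝ) + 1)) =
      Real.log (1 - x + m) - Real.log ((m : ℝ) + 1) := by
    have hm : (0 : ℝ) < m + 1 := by positivity
    rw [← Real.log_div (by linarith) hm.ne']
    congr 1
    field_simp
    ring
  have hharmonic : ∑ m ∈ Finset.range (n + 1), x / ((m : ℝ) + 1) = x * harmonic (n + 1) := by
    simp [harmonic, Finset.mul_sum, div_eq_mul_inv]
  have hfactorial := log_factorial_eq_sum (n + 1)
  rw [Nat.factorial_succ, Nat.cast_mul, Real.log_mul (by positivity) (by positivity)] at hfactorial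
  simp only [hlog, Finset.sum_sub_distrib, Finset.sum_neg_distrib, ← hfactorial, hharmonic,
    Real.BohrMollerup.logGammaSeq]
  push_cast
  ring

lemma tendsto_sum_neg_log_one_sub_div_sub_div (hx : x < 1) :
    Tendsto (fun n : ℕ => ∑ m ∈ Finset.range (n + 1),
        (-Real.log (1 - x / ((m : ℝ) + 1)) - x / ((m : ℝ) + 1))) atTop
      (𝓝 (Real.log (Real.Gamma (1 - x)) - Real.eulerMascheroniConstant * x)) := by
  have hGamma := Real.BohrMollerup.tendsto_log_gamma (sub_pos.2 hx)
  have hharmonic := ((tendsto_add_atTop_iff_nat 1).2 Real.tendsto_harmonic_sub_log).mul_const x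
  have hlog := Real.tendsto_log_nat_add_one_sub_log.mul_const (1 - x)
  simp only [sum_neg_log_one_sub_div_sub_div hx]
  simpa using (hGamma.sub hharmonic).add hlog

lemma norm_div_pow_div_le (m j : ℕ) :
    ‖(x / ((m : ℝ) + 1)) ^ (j + 2) / ((j : ℝ) + 2)‖ ≤ 1 / ((m : ℝ) + 1) ^ 2 * |x| ^ (j + 2) := by
  have hm : (1 : ℝ) ≤ (m : ℝ) + 1 := le_add_of_nonneg_left m.cast_nonneg
  have hj : (1 : ℝ) ≤ (j : ℝ) + 2 := by linarith [j.cast_nonneg (α := ℝ)]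
  rw [norm_div, norm_pow, norm_div, Real.norm_eq_abs, Real.norm_of_nonneg (by positivity),
    Real.norm_of_nonneg (by positivity), div_pow, div_div, one_div_mul_eq_div]
  gcongr
  calc ((m : ℝ) + 1) ^ 2 ≤ ((m : ℝ) + 1) ^ (j + 2) := pow_le_pow_right₀ hm (by lia)
    _ ≤ ((m : ℝ) + 1) ^ (j + 2) * ((j : ℝ) + 2) := le_mul_of_one_le_right (by positivity) hj

lemma summable_div_pow_div (hx : |x| < 1) :
    Summable fun p : ℕ × ℕ => (x / ((p.1 : ℝ) + 1)) ^ (p.2 + 2) / ((p.2 : ℝ) + 2) := by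
  have hgeom : Summable fun j : ℕ => |x| ^ (j + 2) :=
    (summable_nat_add_iff 2).2 (summable_geometric_of_lt_one (abs_nonneg x) hx)
  exact .of_norm_bounded ((summable_one_div_nat_add_one_pow one_lt_two).mul_of_nonneg hgeom
    (fun m => by positivity) (fun j => by positivity)) fun p => norm_div_pow_div_le p.1 p.2

lemma hasSum_div_pow_div_neg_log (hx : |x| < 1) (m : ℕ) :
    HasSum (fun j : ℕ => (x / ((m : ℝ) + 1)) ^ (j + 2) / ((j : ℝ) + 2))
      (-Real.log (1 - x / ((m : ℝ) + 1)) - x / ((m : ℝ) + 1)) := by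
  have hm : (1 : ℝ) ≤ (m : ℝ) + 1 := le_add_of_nonneg_left m.cast_nonneg
  have hxm : |x / ((m : ℝ) + 1)| < 1 := by
    rw [abs_div, abs_of_pos (zero_lt_one.trans_le hm), div_lt_one (zero_lt_one.trans_le hm)]
    exact hx.trans_le hm
  convert! (hasSum_nat_add_iff' 1).2 (Real.hasSum_pow_div_log_of_abs_lt_one hxm) using 2
  · push_cast
    ring
  · simp

lemma hasSum_div_pow_div_logGammaCoeff (x : ℝ) (j : ℕ) :
    HasSum (fun m : ℕ => (x / ((m : ℝ) + 1)) ^ (j + 2) / ((j : ℝ) + 2))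
      (logGammaCoeff (j + 2) * x ^ (j + 2)) := by
  convert! (hasSum_zetaR (j := j + 2) (by lia)).mul_right (x ^ (j + 2) / ((j : ℝ) + 2)) using 1
  · ext m
    rw [div_pow]
    ring
  · rw [logGammaCoeff_of_two_le (by lia)]
    push_cast
    ring

theorem hasSum_logGammaCoeff (hx : |x| < 1) :
    HasSum (fun n : ℕ => logGammaCoeff n * x ^ n)
      (Real.log (Real.Gamma (1 - x)) - Real.eulerMascheroniConstant * x) := by
  have hdouble := (summable_div_pow_div hx).hasSum
  have hrows := hdouble.prod_fiberwise (hasSum_div_pow_div_neg_log hx)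
  have hcols := ((Equiv.prodComm ℕ ℕ).hasSum_iff.2 hdouble).prod_fiberwise
    (hasSum_div_pow_div_logGammaCoeff x)
  rw [tendsto_nhds_unique ((tendsto_add_atTop_iff_nat 1).2 hrows.tendsto_sum_nat)
    (tendsto_sum_neg_log_one_sub_div_sub_div (abs_lt.1 hx).2)] at hcols
  convert! (hasSum_nat_add_iff (f := fun n : ℕ => logGammaCoeff n * x ^ n) 2).1 hcols using 1
  simp [Finset.sum_range_succ, logGammaCoeff]

end LogGamma

section LogCos

variable {x : ℝ}

lemma Gamma_half_add_mul_Gamma_half_sub (x : ℝ) :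
    Real.Gamma (1 / 2 + x / 2) * Real.Gamma (1 / 2 - x / 2) =
      Real.pi / Real.cos (Real.pi / 2 * x) := by
  convert! Real.Gamma_mul_Gamma_one_sub (1 / 2 + x / 2) using 2
  · ring_nf
  · rw [← Real.sin_add_pi_div_two]
    ring_nf

lemma Gamma_half_add_mul_Gamma_one_add_half (x : ℝ) :
    Real.Gamma (1 / 2 + x / 2) * Real.Gamma (1 + x / 2) =
      Real.Gamma (1 + x) * 2 ^ (-x) * √Real.pi := by
  convert! Real.Gamma_mul_Gamma_add_half (1 / 2 + x / 2) using 3 <;> ring_nf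

-- Reflection at `1/2 + x/2`, combined with duplication at `1/2 ± x/2`.
lemma cos_mul_Gamma_one_sub_mul_Gamma_one_add (hx : Real.cos (Real.pi / 2 * x) ≠ 0) :
    Real.cos (Real.pi / 2 * x) * (Real.Gamma (1 - x) * Real.Gamma (1 + x)) =
      Real.Gamma (1 - x / 2) * Real.Gamma (1 + x / 2) := by
  have hreflect := Gamma_half_add_mul_Gamma_half_sub x
  have hdouble := Gamma_half_add_mul_Gamma_one_add_half x
  have hdouble' := Gamma_half_add_mul_Gamma_one_add_half (-x)
  simp only [neg_div, ← sub_eq_add_neg, neg_neg] at hdouble'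
  have hpow : (2 : ℝ) ^ (-x) * 2 ^ x = 1 := by
    rw [← Real.rpow_add two_pos, neg_add_cancel, Real.rpow_zero]
  rw [eq_div_iff hx] at hreflect
  refine mul_left_cancel₀ Real.pi_ne_zero ?_
  calc Real.pi * (Real.cos (Real.pi / 2 * x) * (Real.Gamma (1 - x) * Real.Gamma (1 + x)))
      = Real.cos (Real.pi / 2 * x) * (Real.Gamma (1 + x) * 2 ^ (-x) * √Real.pi) *
          (Real.Gamma (1 - x) * 2 ^ x * √Real.pi) := by
        linear_combination -(Real.cos (Real.pi / 2 * x) * Real.Gamma (1 - x) * Real.Gamma (1 + x)) *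
          (Real.mul_self_sqrt Real.pi_pos.le + √Real.pi * √Real.pi * hpow)
    _ = Real.pi * (Real.Gamma (1 - x / 2) * Real.Gamma (1 + x / 2)) := by
        rw [← hdouble, ← hdouble']
        linear_combination Real.Gamma (1 - x / 2) * Real.Gamma (1 + x / 2) * hreflect

lemma log_cos_eq_log_Gamma (hx : |x| < 1) :
    Real.log (Real.cos (Real.pi / 2 * x)) =
      Real.log (Real.Gamma (1 - x / 2)) + Real.log (Real.Gamma (1 + x / 2))
        - Real.log (Real.Gamma (1 - x)) - Real.log (Real.Gamma (1 + x)) := by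
  have hx' := abs_lt.1 hx
  have hpos {y : ℝ} (hy : 0 < y) : Real.Gamma y ≠ 0 := (Real.Gamma_pos_of_pos hy).ne'
  have hcos := (cos_pi_div_two_mul_pos hx).ne'
  have h := congrArg Real.log (cos_mul_Gamma_one_sub_mul_Gamma_one_add hcos)
  rw [Real.log_mul hcos (mul_ne_zero (hpos (by linarith)) (hpos (by linarith))),
    Real.log_mul (hpos (by linarith)) (hpos (by linarith)),
    Real.log_mul (hpos (by linarith)) (hpos (by linarith))] at h
  linear_combination h

lemma abs_mul_lt_one {c : ℝ} (hc : |c| ≤ 1) (hx : |x| < 1) : |c * x| < 1 := by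
  rw [abs_mul]
  exact mul_lt_one_of_nonneg_of_lt_one_right hc (abs_nonneg x) hx

/-- Taylor coefficients at `0` of `x ↦ log cos (π x / 2)`, in the form given by writing this
function as a combination of values of `log Γ`. -/
noncomputable def logCosCoeff (n : ℕ) : ℝ :=
  logGammaCoeff n * ((1 / 2) ^ n + (-1 / 2) ^ n - 1 - (-1) ^ n)

theorem hasSum_logCosCoeff (hx : |x| < 1) :
    HasSum (fun n : ℕ => logCosCoeff n * x ^ n) (Real.log (Real.cos (Real.pi / 2 * x))) := by
  have hscaled {c : ℝ} (hc : |c| ≤ 1) := hasSum_logGammaCoeff (abs_mul_lt_one hc hx)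
  convert! (((hscaled (c := 1 / 2) (by norm_num [abs_le])).add
    (hscaled (c := -1 / 2) (by norm_num [abs_le]))).sub
    (hscaled (c := 1) (by simp))).sub (hscaled (c := -1) (by simp)) using 1
  · ext n
    rw [logCosCoeff, mul_pow, mul_pow, mul_pow, mul_pow, one_pow]
    ring
  · rw [log_cos_eq_log_Gamma hx]
    ring_nf

end LogCos

section TaylorCoefficients

open Filter Topology

lemma hasFPowerSeriesAt_ofScalars_of_hasSum {𝕜 : Type*} [NontriviallyNormedField 𝕜]
    {f : 𝕜 → 𝕜} {a : ℕ → 𝕜} (h : ∀ᶠ s in 𝓝 0, HasSum (fun n => a n * s ^ n) (f s)) :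
    HasFPowerSeriesAt f (FormalMultilinearSeries.ofScalars 𝕜 a) 0 := by
  rw [hasFPowerSeriesAt_iff]
  filter_upwards [h] with s hs
  simpa [mul_comm] using hs

lemma iteratedDeriv_eq_factorial_mul_of_hasSum {𝕜 : Type*} [NontriviallyNormedField 𝕜]
    [CompleteSpace 𝕜] [CharZero 𝕜] {f : 𝕜 → 𝕜} {a : ℕ → 𝕜}
    (h : ∀ᶠ s in 𝓝 0, HasSum (fun n => a n * s ^ n) (f s)) (n : ℕ) :
    iteratedDeriv n f 0 = n.factorial * a n := by
  have hseries := hasFPowerSeriesAt_ofScalars_of_hasSum h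
  have hcoeff := congrArg (fun p => FormalMultilinearSeries.coeff p n)
    (hseries.eq_formalMultilinearSeries hseries.analyticAt.hasFPowerSeriesAt)
  simp only [FormalMultilinearSeries.coeff_ofScalars] at hcoeff
  rw [hcoeff, mul_div_cancel₀ _ (by exact_mod_cast n.factorial_ne_zero)]

lemma iteratedDeriv_succ_exp_comp {f : ℝ → ℝ} {x : ℝ} (hf : AnalyticAt ℝ f x) (n : ℕ) :
    iteratedDeriv (n + 1) (fun s => Real.exp (f s)) x =
      ∑ i ∈ Finset.range (n + 1), n.choose i * iteratedDeriv (i + 1) f x *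
        iteratedDeriv (n - i) (fun s => Real.exp (f s)) x := by
  have hderiv : deriv (fun s => Real.exp (f s)) =ᶠ[𝓝 x] deriv f * fun s => Real.exp (f s) := by
    filter_upwards [hf.eventually_analyticAt] with s hs
    rw [hs.differentiableAt.hasDerivAt.exp.deriv, Pi.mul_apply, mul_comm]
  have hexp : ContDiffAt ℝ n (fun s => Real.exp (f s)) x := hf.rexp.contDiffAt
  rw [iteratedDeriv_succ', hderiv.iteratedDeriv_eq, iteratedDeriv_mul hf.deriv.contDiffAt hexp]
  simp only [iteratedDeriv_succ']

lemma iteratedDeriv_six_exp_comp {f : ℝ → ℝ} {x : ℝ} (hf : AnalyticAt ℝ f x) (hf0 : f x = 0)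
    (hf1 : iteratedDeriv 1 f x = 0) :
    iteratedDeriv 6 (fun s => Real.exp (f s)) x =
      15 * iteratedDeriv 2 f x ^ 3 + 15 * iteratedDeriv 4 f x * iteratedDeriv 2 f x +
        10 * iteratedDeriv 3 f x ^ 2 + iteratedDeriv 6 f x := by
  simp only [iteratedDeriv_succ_exp_comp hf, Nat.reduceAdd, Finset.sum_range_succ,
    Finset.range_one, Finset.sum_singleton, Nat.choose, Nat.cast_one, zero_add, hf1, mul_zero,
    tsub_zero, zero_tsub, iteratedDeriv_zero, hf0, Real.exp_zero, mul_one, add_zero, one_mul,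
    tsub_self, zero_mul, Nat.cast_ofNat, Nat.add_one_sub_one, Nat.reduceSub, add_left_inj]
  ring

end TaylorCoefficients

section MomentsFromMGF

open Set Filter Topology

variable {Ω : Type*} [MeasurableSpace Ω] {μ : Measure Ω} {V : Ω → ℝ} {n : ℕ} {δ : ℝ}

lemma exp_mul_le_one_add_exp_mul {s t : ℝ} (hs : 0 ≤ s) (hst : s ≤ t) (v : ℝ) :
    Real.exp (s * v) ≤ 1 + Real.exp (t * v) := by
  rcases le_total 0 v with hv | hv
  · have h : Real.exp (s * v) ≤ Real.exp (t * v) := by gcongr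
    linarith
  · linarith [Real.exp_le_one_iff.2 (mul_nonpos_of_nonneg_of_nonpos hs hv), Real.exp_pos (t * v)]

lemma tendsto_integral_pow_mul_exp_nhdsGT_zero (hδ : 0 < δ)
    (hV : Integrable (fun ω => V ω ^ n) μ) (hexp : Ioo 0 δ ⊆ integrableExpSet V μ) :
    Tendsto (fun s => ∫ ω, V ω ^ n * Real.exp (s * V ω) ∂μ) (𝓝[>] 0)
      (𝓝 (∫ ω, V ω ^ n ∂μ)) := by
  have hhalf : δ / 2 ∈ interior (integrableExpSet V μ) :=
    isOpen_Ioo.subset_interior_iff.2 hexp ⟨half_pos hδ, half_lt_self hδ⟩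
  have hmeas : AEMeasurable V μ := aemeasurable_of_mem_interior_integrableExpSet hhalf
  refine tendsto_integral_filter_of_dominated_convergence
    (fun ω => |V ω ^ n| + |V ω ^ n * Real.exp (δ / 2 * V ω)|)
    (.of_forall fun s => by fun_prop) ?_
    (hV.abs.add (integrable_pow_mul_exp_of_mem_interior_integrableExpSet hhalf n).abs) ?_
  · filter_upwards [Ioo_mem_nhdsGT (half_pos hδ)] with s hs
    refine .of_forall fun ω => ?_
    calc ‖V ω ^ n * Real.exp (s * V ω)‖
        = |V ω ^ n| * Real.exp (s * V ω) := by
          rw [Real.norm_eq_abs, abs_mul, Real.abs_exp]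
      _ ≤ |V ω ^ n| * (1 + Real.exp (δ / 2 * V ω)) := by
          gcongr
          exact exp_mul_le_one_add_exp_mul hs.1.le hs.2.le _
      _ = _ := by rw [abs_mul, Real.abs_exp, mul_add, mul_one]
  · refine .of_forall fun ω => ?_
    have hcont : Continuous fun s : ℝ => V ω ^ n * Real.exp (s * V ω) := by fun_prop
    simpa using (hcont.tendsto 0).mono_left nhdsWithin_le_nhds

lemma integral_pow_eq_iteratedDeriv_of_mgf_eqOn {M : ℝ → ℝ} (hδ : 0 < δ)
    (hV : Integrable (fun ω => V ω ^ n) μ) (hexp : Ioo 0 δ ⊆ integrableExpSet V μ)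
    (hM : AnalyticAt ℝ M 0) (hmgf : EqOn (mgf V μ) M (Ioo 0 δ)) :
    ∫ ω, V ω ^ n ∂μ = iteratedDeriv n M 0 := by
  have hlim : Tendsto (iteratedDeriv n M) (𝓝[>] 0) (𝓝 (iteratedDeriv n M 0)) := by
    rw [iteratedDeriv_eq_iterate]
    exact (hM.iterated_deriv n).continuousAt.tendsto.mono_left nhdsWithin_le_nhds
  refine tendsto_nhds_unique (tendsto_integral_pow_mul_exp_nhdsGT_zero hδ hV hexp)
    (hlim.congr' ?_)
  filter_upwards [Ioo_mem_nhdsGT hδ] with s hs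
  rw [← (hmgf.eventuallyEq_of_mem (isOpen_Ioo.mem_nhds hs)).iteratedDeriv_eq,
    iteratedDeriv_mgf (isOpen_Ioo.subset_interior_iff.2 hexp hs)]

end MomentsFromMGF

section StableCumulants

open Filter Topology

variable {b θ τ s : ℝ}

/-- Cumulant generating function of the centered logarithm of a strictly stable variable with
parameters `(b ^ 2, θ, τ)`. The linear terms come from the normalization `C (ν^(-1/2) - 1)` of the
characteristic function and make the mean vanish. -/
noncomputable def stableLogCgf (b θ s : ℝ) : ℝ :=
  (Real.log (Real.Gamma (1 - b * s)) - Real.eulerMascheroniConstant * (b * s))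
    - (Real.log (Real.Gamma (1 - s)) - Real.eulerMascheroniConstant * s)
    + Real.log (Real.cos (Real.pi / 2 * (θ * s))) - Real.log (Real.cos (Real.pi / 2 * s))

/-- Taylor coefficients at `0` of `stableLogCgf b θ`. -/
noncomputable def stableLogCgfCoeff (b θ : ℝ) (n : ℕ) : ℝ :=
  logGammaCoeff n * (b ^ n - 1) + logCosCoeff n * (θ ^ n - 1)

lemma hasSum_stableLogCgfCoeff (hθ : |θ| ≤ 1) (hs : |s| < 1) (hbs : |b * s| < 1) :
    HasSum (fun n => stableLogCgfCoeff b θ n * s ^ n) (stableLogCgf b θ s) := by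
  convert! (((hasSum_logGammaCoeff hbs).sub (hasSum_logGammaCoeff hs)).add
    (hasSum_logCosCoeff (abs_mul_lt_one hθ hs))).sub (hasSum_logCosCoeff hs) using 1
  ext n
  rw [stableLogCgfCoeff, mul_pow, mul_pow]
  ring

lemma eventually_hasSum_stableLogCgfCoeff (hθ : |θ| ≤ 1) :
    ∀ᶠ s in 𝓝 0, HasSum (fun n => stableLogCgfCoeff b θ n * s ^ n) (stableLogCgf b θ s) := by
  have hsmall (c : ℝ) : ∀ᶠ s : ℝ in 𝓝 0, |c * s| < 1 :=
    (by fun_prop : Continuous fun s => |c * s|).continuousAt.eventually_lt_const (by simp)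
  filter_upwards [hsmall 1, hsmall b] with s hs hbs
  exact hasSum_stableLogCgfCoeff hθ (by rwa [one_mul] at hs) hbs

lemma analyticAt_stableLogCgf (hθ : |θ| ≤ 1) : AnalyticAt ℝ (stableLogCgf b θ) 0 :=
  (hasFPowerSeriesAt_ofScalars_of_hasSum (eventually_hasSum_stableLogCgfCoeff hθ)).analyticAt

lemma iteratedDeriv_stableLogCgf (hθ : |θ| ≤ 1) (n : ℕ) :
    iteratedDeriv n (stableLogCgf b θ) 0 = n.factorial * stableLogCgfCoeff b θ n :=
  iteratedDeriv_eq_factorial_mul_of_hasSum (eventually_hasSum_stableLogCgfCoeff hθ) n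

lemma iteratedDeriv_one_stableLogCgf (hθ : |θ| ≤ 1) :
    iteratedDeriv 1 (stableLogCgf b θ) 0 = 0 := by
  simp [iteratedDeriv_stableLogCgf hθ, stableLogCgfCoeff, logCosCoeff, logGammaCoeff]

lemma iteratedDeriv_two_stableLogCgf (hθ : |θ| ≤ 1) :
    iteratedDeriv 2 (stableLogCgf b θ) 0 =
      Real.pi ^ 2 / 4 * (1 - θ ^ 2) + Real.pi ^ 2 / 6 * (b ^ 2 - 1) := by
  rw [iteratedDeriv_stableLogCgf hθ]
  norm_num [stableLogCgfCoeff, logCosCoeff, logGammaCoeff, zetaR_two]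
  ring

lemma iteratedDeriv_three_stableLogCgf (hθ : |θ| ≤ 1) :
    iteratedDeriv 3 (stableLogCgf b θ) 0 = 2 * zetaR 3 * (b ^ 3 - 1) := by
  rw [iteratedDeriv_stableLogCgf hθ]
  norm_num [stableLogCgfCoeff, logCosCoeff, logGammaCoeff, Nat.factorial]
  ring

lemma iteratedDeriv_four_stableLogCgf (hθ : |θ| ≤ 1) :
    iteratedDeriv 4 (stableLogCgf b θ) 0 =
      Real.pi ^ 4 * ((1 - θ ^ 4) / 8 + (b ^ 4 - 1) / 15) := by
  rw [iteratedDeriv_stableLogCgf hθ]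
  norm_num [stableLogCgfCoeff, logCosCoeff, logGammaCoeff, zetaR_four, Nat.factorial]
  ring

lemma iteratedDeriv_six_stableLogCgf (hθ : |θ| ≤ 1) :
    iteratedDeriv 6 (stableLogCgf b θ) 0 =
      8 * Real.pi ^ 6 * ((1 - θ ^ 6) / 32 + (b ^ 6 - 1) / 63) := by
  rw [iteratedDeriv_stableLogCgf hθ]
  norm_num [stableLogCgfCoeff, logCosCoeff, logGammaCoeff, zetaR_six, Nat.factorial]
  ring

lemma exp_stableLogCgf_mul (hθ : |θ| ≤ 1) (hs : |s| < 1) (hbs : b * s < 1) :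
    Real.exp (stableLogCgf b θ s) * (Real.Gamma (1 - s) * Real.cos (Real.pi / 2 * s)) =
      Real.Gamma (1 - b * s) * Real.cos (Real.pi / 2 * (θ * s)) *
        Real.exp (Real.eulerMascheroniConstant * (1 - b) * s) := by
  rw [← Real.exp_log (cos_pi_div_two_mul_pos (abs_mul_lt_one hθ hs)),
    ← Real.exp_log (cos_pi_div_two_mul_pos hs),
    ← Real.exp_log (Real.Gamma_pos_of_pos (sub_pos.2 (abs_lt.1 hs).2)),
    ← Real.exp_log (Real.Gamma_pos_of_pos (sub_pos.2 hbs))]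
  simp only [← Real.exp_add, stableLogCgf]
  ring_nf

/-- The complex number `w` for which a strictly stable law with parameters `(b ^ 2, θ, τ)` has
characteristic function `k ↦ exp (- e^w k^(1/b))` on `k > 0`. -/
noncomputable def stableLogScale (b θ τ : ℝ) : ℂ :=
  ⟨b⁻¹ * τ + Real.eulerMascheroniConstant * (b⁻¹ - 1), -(b⁻¹ * (Real.pi / 2 * θ))⟩

lemma abs_im_stableLogScale_le (hb : 0 < b) (hθ : |θ| ≤ b) :
    |(stableLogScale b θ τ).im| ≤ Real.pi / 2 := by
  calc |(stableLogScale b θ τ).im| = Real.pi / 2 * (b⁻¹ * |θ|) := by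
        rw [stableLogScale, abs_neg, abs_mul, abs_mul, abs_of_pos (inv_pos.2 hb),
          abs_of_pos Real.pi_div_two_pos]
        ring
    _ ≤ Real.pi / 2 * 1 := by
        gcongr
        rwa [inv_mul_le_iff₀ hb, mul_one]
    _ = Real.pi / 2 := mul_one _

lemma integral_rpow_abs_of_charFun_eq_stableLogScale {μ : Measure ℝ} [IsProbabilityMeasure μ]
    (hb : 0 < b) (hθ : |θ| ≤ 1) (hθb : |θ| ≤ b) (hμ : ∀ k : ℝ, 0 < k → charFun μ k =
      Complex.exp (-(Complex.exp (stableLogScale b θ τ) * (k ^ b⁻¹ : ℝ))))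
    (hs : 0 < s) (hs' : s < 1) (hsb : s < b⁻¹) :
    ∫ x, |x| ^ s ∂μ = Real.exp (s * τ) * Real.exp (stableLogCgf b θ s) := by
  have hbs : b * s < 1 := by rwa [← lt_inv_mul_iff₀ hb, mul_one]
  have hs_abs : |s| < 1 := by rwa [abs_of_pos hs]
  have hmoment := integral_rpow_abs_of_charFun_eq (abs_im_stableLogScale_le hb hθb) hμ hs hs' hsb
  have hre : (stableLogScale b θ τ).re * (s / b⁻¹) =
      s * τ + Real.eulerMascheroniConstant * (1 - b) * s := by
    rw [stableLogScale]; field_simp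
  have him : (stableLogScale b θ τ).im * (s / b⁻¹) = -(Real.pi / 2 * (θ * s)) := by
    rw [stableLogScale]; field_simp
  rw [hre, him, Real.cos_neg, Real.exp_add, div_inv_eq_mul, mul_comm s b] at hmoment
  have hne : Real.Gamma (1 - s) * Real.cos (Real.pi / 2 * s) ≠ 0 :=
    (mul_pos (Real.Gamma_pos_of_pos (sub_pos.2 hs')) (cos_pi_div_two_mul_pos hs_abs)).ne'
  refine mul_left_cancel₀ hne ?_
  linear_combination hmoment - Real.exp (s * τ) * exp_stableLogCgf_mul hθ hs_abs hbs

end StableCumulants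

namespace IsStrictlyStable

open Set

variable {Ω : Type*} [MeasureSpace Ω] {X : Ω → ℝ} {ν θ τ s : ℝ}

lemma measurable (hX : IsStrictlyStable X ν θ τ) : Measurable X := hX.1

lemma pos (hX : IsStrictlyStable X ν θ τ) : 0 < ν := by linarith [hX.2.1]

lemma abs_le_one (hX : IsStrictlyStable X ν θ τ) : |θ| ≤ 1 := hX.2.2.1.trans (min_le_left _ _)

lemma abs_le_sqrt (hX : IsStrictlyStable X ν θ τ) : |θ| ≤ √ν := by
  linarith [hX.abs_le_one, hX.2.2.1.trans (min_le_right _ _)]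

lemma ae_ne_zero (hX : IsStrictlyStable X ν θ τ) : ∀ᵐ ω, X ω ≠ 0 := by
  simpa only [ae_iff, not_not] using hX.2.2.2.1

lemma charFun_map (hX : IsStrictlyStable X ν θ τ) {k : ℝ} (hk : 0 < k) :
    charFun (Measure.map X ℙ) k =
      Complex.exp (-(Complex.exp (stableLogScale √ν θ τ) * (k ^ (√ν)⁻¹ : ℝ))) := by
  have hchar := hX.2.2.2.2.2 k hk.ne'
  rw [Real.rpow_neg hX.pos.le, ← Real.sqrt_eq_rpow, Real.sign_of_pos hk, abs_of_pos hk] at hchar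
  rw [charFun_apply_real, integral_map hX.measurable.aemeasurable (by fun_prop),
    Real.rpow_def_of_pos hk, Complex.ofReal_exp, ← Complex.exp_add]
  convert! hchar using 3
  · congr 1
    ring
  · rw [stableLogScale, Complex.mk_eq_add_mul_I]
    push_cast
    ring_nf

lemma exp_mul_log_abs_sub_ae_eq (hX : IsStrictlyStable X ν θ τ) (s : ℝ) :
    (fun ω => Real.exp (s * (Real.log |X ω| - τ))) =ᵐ[ℙ]
      fun ω => |X ω| ^ s * Real.exp (-(s * τ)) := by
  filter_upwards [hX.ae_ne_zero] with ω hω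
  rw [Real.rpow_def_of_pos (abs_pos.2 hω), ← Real.exp_add]
  ring_nf

variable [IsProbabilityMeasure (ℙ : Measure Ω)]

lemma integrable_log_abs_sub_pow (hX : IsStrictlyStable X ν θ τ) (n : ℕ) :
    Integrable fun ω => (Real.log |X ω| - τ) ^ n := by
  have hmeas := hX.measurable
  refine (((hX.2.2.2.2.1 n).add (integrable_const (|τ| ^ n))).const_mul (2 ^ (n - 1))).mono'
    (Measurable.aestronglyMeasurable (by fun_prop)) (.of_forall fun ω => ?_)
  calc ‖(Real.log |X ω| - τ) ^ n‖ = |Real.log |X ω| - τ| ^ n := by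
        rw [norm_pow, Real.norm_eq_abs]
    _ ≤ (|(Real.log |X ω|)| + |τ|) ^ n := by
        gcongr
        exact abs_sub _ _
    _ ≤ 2 ^ (n - 1) * (|(Real.log |X ω|)| ^ n + |τ| ^ n) :=
        add_pow_le (abs_nonneg _) (abs_nonneg _) n

lemma mem_integrableExpSet (hX : IsStrictlyStable X ν θ τ) (hs : s ∈ Ioo 0 (min 1 (√ν)⁻¹)) :
    s ∈ integrableExpSet (fun ω => Real.log |X ω| - τ) ℙ := by
  have hmeas := hX.measurable
  have := Measure.isProbabilityMeasure_map (μ := (ℙ : Measure Ω)) hmeas.aemeasurable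
  obtain ⟨hs, hs', hsν⟩ : 0 < s ∧ s < 1 ∧ s < (√ν)⁻¹ := by simpa using hs
  have hint := integrable_rpow_abs_of_charFun_eq
    (abs_im_stableLogScale_le (Real.sqrt_pos.2 hX.pos) hX.abs_le_sqrt)
    (fun k hk => hX.charFun_map hk) hs hs' hsν
  rw [integrable_map_measure hint.aestronglyMeasurable hmeas.aemeasurable] at hint
  exact (integrable_congr (hX.exp_mul_log_abs_sub_ae_eq s)).2 (hint.mul_const _)

lemma mgf_log_abs_sub (hX : IsStrictlyStable X ν θ τ) (hs : s ∈ Ioo 0 (min 1 (√ν)⁻¹)) :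
    mgf (fun ω => Real.log |X ω| - τ) ℙ s = Real.exp (stableLogCgf √ν θ s) := by
  have hmeas := hX.measurable
  have := Measure.isProbabilityMeasure_map (μ := (ℙ : Measure Ω)) hmeas.aemeasurable
  obtain ⟨hs, hs', hsν⟩ : 0 < s ∧ s < 1 ∧ s < (√ν)⁻¹ := by simpa using hs
  have hmoment := integral_rpow_abs_of_charFun_eq_stableLogScale (Real.sqrt_pos.2 hX.pos)
    hX.abs_le_one hX.abs_le_sqrt (fun k hk => hX.charFun_map hk) hs hs' hsν
  rw [integral_map hmeas.aemeasurable (Measurable.aestronglyMeasurable (by fun_prop))] at hmoment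
  rw [mgf, integral_congr_ae (hX.exp_mul_log_abs_sub_ae_eq s), integral_mul_const, hmoment,
    mul_right_comm, ← Real.exp_add, add_neg_cancel, Real.exp_zero, one_mul]

theorem integral_log_abs_sub_pow (hX : IsStrictlyStable X ν θ τ) (n : ℕ) :
    ∫ ω, (Real.log |X ω| - τ) ^ n =
      iteratedDeriv n (fun s => Real.exp (stableLogCgf √ν θ s)) 0 :=
  integral_pow_eq_iteratedDeriv_of_mgf_eqOn
    (lt_min one_pos (inv_pos.2 (Real.sqrt_pos.2 hX.pos))) (hX.integrable_log_abs_sub_pow n)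
    (fun _ hs => hX.mem_integrableExpSet hs) (analyticAt_stableLogCgf hX.abs_le_one).rexp
    fun _ hs => hX.mgf_log_abs_sub hs

end IsStrictlyStable

theorem sixth_central_log_moment {Ω : Type*} [MeasureSpace Ω]
    [IsProbabilityMeasure (ℙ : Measure Ω)] (X : Ω → ℝ) (ν θ τ : ℝ)
    (hX : IsStrictlyStable X ν θ τ)
    (DV : ℝ) (hDV : DV = Real.pi ^ 2 / 4 * (1 - θ ^ 2) + Real.pi ^ 2 / 6 * (ν - 1)) :
    (∫ ω, (Real.log |X ω| - τ) ^ 6) =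
      15 * DV ^ 3 + 15 * Real.pi ^ 4 * ((1 - θ ^ 4) / 8 + (ν ^ 2 - 1) / 15) * DV
        + 8 * Real.pi ^ 6 * ((1 - θ ^ 6) / 32 + (ν ^ 3 - 1) / 63)
        + 40 * zetaR 3 ^ 2 * (ν ^ ((3 : ℝ) / 2) - 1) ^ 2 := by
  have hν : √ν ^ 2 = ν := Real.sq_sqrt hX.pos.le
  have hν' : ν ^ ((3 : ℝ) / 2) = √ν ^ 3 := by
    rw [Real.sqrt_eq_rpow, ← Real.rpow_mul_natCast hX.pos.le]
    norm_num
  have hcgf : AnalyticAt ℝ (stableLogCgf √ν θ) 0 := analyticAt_stableLogCgf hX.abs_le_one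
  rw [hX.integral_log_abs_sub_pow 6, iteratedDeriv_six_exp_comp hcgf (by simp [stableLogCgf])
      (iteratedDeriv_one_stableLogCgf hX.abs_le_one),
    iteratedDeriv_two_stableLogCgf hX.abs_le_one, iteratedDeriv_three_stableLogCgf hX.abs_le_one,
    iteratedDeriv_four_stableLogCgf hX.abs_le_one, iteratedDeriv_six_stableLogCgf hX.abs_le_one,
    hν', hDV, ← hν, Real.sqrt_sq (Real.sqrt_nonneg ν)]
  ring
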